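/- Let 0 ≤ ε ≤ 1. Let A and B be finite sequences of real numbers such that B is a suffix of A, f(B) ≥ (1 - ε)·f(A), and Suf(B) ≥ (1 - ε)·Suf(A). Then for every finite sequence C of real numbers, f(B ++ C) ≥ (1 - ε)·f(A ++ C). -/

import Mathlib

/-!
A contiguous block of `A ++ C` lies in `A`, lies in `C`, or is a suffix of `A` followed by a prefix
of `C`, so
  `msum (A ++ C) = max (msum A) (max (msum C) (sufsum A + presum C))`.
The right-hand side is monotone in `msum A` and `sufsum A`, the only data of `A` it involves, and
the terms coming from `C` are nonnegative, hence only decrease when multiplied by `1 - ε`.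
-/

/-- Maximum subarray sum of a finite sequence: the maximum of 0 and all sums of
contiguous subsequences (the empty infix, of sum 0, is among the infixes). -/
noncomputable def msum (W : List ℝ) : ℝ :=
  ((W.inits.flatMap List.tails).map List.sum).foldr max 0

/-- Maximum prefix sum: the maximum of 0 and all prefix sums. -/
noncomputable def presum (W : List ℝ) : ℝ :=
  (W.inits.map List.sum).foldr max 0

/-- Maximum suffix sum: the maximum of 0 and all suffix sums. -/
noncomputable def sufsum (W : List ℝ) : ℝ :=
  (W.tails.map List.sum).foldr max 0

theorem foldr_sup_le_iff {α : Type*} [SemilatticeSup α] {l : List α} {b x : α} :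
    l.foldr (· ⊔ ·) b ≤ x ↔ b ≤ x ∧ ∀ a ∈ l, a ≤ x := by
  induction l with
  | nil => simp
  | cons a l ih => simp [ih, and_left_comm]

theorem mem_flatMap_tails_inits {α : Type*} {I W : List α} :
    I ∈ W.inits.flatMap List.tails ↔ I <:+: W := by
  simp only [List.mem_flatMap, List.mem_inits, List.mem_tails, List.infix_iff_suffix_prefix,
    and_comm]

theorem msum_le_iff {W : List ℝ} {x : ℝ} : msum W ≤ x ↔ ∀ I, I <:+: W → I.sum ≤ x := by
  simp only [msum, foldr_sup_le_iff, List.forall_mem_map, mem_flatMap_tails_inits,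
    and_iff_right_iff_imp]
  exact fun h => h [] List.nil_infix

theorem presum_le_iff {W : List ℝ} {x : ℝ} : presum W ≤ x ↔ ∀ P, P <+: W → P.sum ≤ x := by
  simp only [presum, foldr_sup_le_iff, List.forall_mem_map, List.mem_inits, and_iff_right_iff_imp]
  exact fun h => h [] List.nil_prefix

theorem sufsum_le_iff {W : List ℝ} {x : ℝ} : sufsum W ≤ x ↔ ∀ S, S <:+ W → S.sum ≤ x := by
  simp only [sufsum, foldr_sup_le_iff, List.forall_mem_map, List.mem_tails, and_iff_right_iff_imp]
  exact fun h => h [] List.nil_suffix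

theorem msum_nonneg (W : List ℝ) : 0 ≤ msum W :=
  msum_le_iff.1 le_rfl [] List.nil_infix

theorem presum_nonneg (W : List ℝ) : 0 ≤ presum W :=
  presum_le_iff.1 le_rfl [] List.nil_prefix

theorem sufsum_add_presum_le_iff {A C : List ℝ} {x : ℝ} :
    sufsum A + presum C ≤ x ↔ ∀ S, S <:+ A → ∀ P, P <+: C → (S ++ P).sum ≤ x :=
  calc
    sufsum A + presum C ≤ x ↔ ∀ S, S <:+ A → S.sum ≤ x - presum C := by
      rw [← le_sub_iff_add_le, sufsum_le_iff]
    _ ↔ ∀ S, S <:+ A → ∀ P, P <+: C → P.sum ≤ x - S.sum := by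
      simp only [le_sub_comm (c := presum C), presum_le_iff]
    _ ↔ ∀ S, S <:+ A → ∀ P, P <+: C → (S ++ P).sum ≤ x := by
      simp only [le_sub_iff_add_le', List.sum_append]

theorem msum_append (A C : List ℝ) :
    msum (A ++ C) = max (msum A) (max (msum C) (sufsum A + presum C)) := by
  refine eq_of_forall_ge_iff fun x => ?_
  simp only [max_le_iff, msum_le_iff, sufsum_add_presum_le_iff, List.infix_append_iff]
  grind

theorem msum_pruning_general {ε : ℝ} (hε : 0 ≤ ε) {A B : List ℝ}
    (hf : (1 - ε) * msum A ≤ msum B) (hsuf : (1 - ε) * sufsum A ≤ sufsum B) (C : List ℝ) :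
    (1 - ε) * msum (A ++ C) ≤ msum (B ++ C) := by
  rcases le_total (1 - ε) 0 with hneg | hpos
  · exact (mul_nonpos_of_nonpos_of_nonneg hneg (msum_nonneg _)).trans (msum_nonneg _)
  have hle : 1 - ε ≤ 1 := sub_le_self 1 hε
  have hC : (1 - ε) * msum C ≤ msum C := mul_le_of_le_one_left (msum_nonneg C) hle
  have hcross : (1 - ε) * (sufsum A + presum C) ≤ sufsum B + presum C := by
    rw [mul_add]
    exact add_le_add hsuf (mul_le_of_le_one_left (presum_nonneg C) hle)
  simp only [msum_append, mul_max_of_nonneg _ _ hpos]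
  exact max_le_max hf (max_le_max hC hcross)

/-- The improved pruning rule preserves the maximum subarray sum up to a
factor (1 - ε). -/
theorem msum_pruning (ε : ℝ) (hε0 : 0 ≤ ε) (hε1 : ε ≤ 1)
    (A B : List ℝ) (hBA : B <:+ A)
    (hf : msum B ≥ (1 - ε) * msum A)
    (hsuf : sufsum B ≥ (1 - ε) * sufsum A) :
    ∀ C : List ℝ, msum (B ++ C) ≥ (1 - ε) * msum (A ++ C) :=
  msum_pruning_general hε0 hf hsuf
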